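/- The solution ψ of the zero Fourier mode problem satisfies ‖ψ'‖² ≤ (R²/π⁴)·‖F‖² and ‖ψ‖² ≤ (R²/π⁶)·‖F‖². -/

import Mathlib

open MeasureTheory Complex

noncomputable section

/-- Square of the L² norm over [0,1]. -/
def l2sq (f : ℝ → ℂ) : ℝ := ∫ y in (0:ℝ)..(1:ℝ), ‖f y‖ ^ 2

/-- L² inner product over [0,1]. -/
def l2ip (f g : ℝ → ℂ) : ℂ := ∫ y in (0:ℝ)..(1:ℝ), (starRingEnd ℂ) (f y) * g y

/-!
The zero-mode equation says that the flux `R⁻¹ψ''' - iξψ' - F` is constant. Testing it against `ψ'`,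
whose mean vanishes, removes the constant; the term `iξψ'` drops out because multiplication by `iξ`
is skew, and what is left is the energy identity `‖ψ''‖² = -R Re ⟨ψ', F⟩`. The sharp Poincaré
inequality for functions vanishing at both ends (constant `1/π`) lets Young's inequality absorb
`ψ'` into `ψ''`, so that `‖ψ''‖ ≤ (R/π)‖F‖`. Two further applications, to `ψ'` and to `ψ`, gain one
factor `1/π` each.

The Poincaré inequality is itself obtained by completing a square: if `φ' = q + φ²` then
`‖g'‖² - q‖g‖² = ‖g' + φg‖² - (φ‖g‖²)'`, and `φ = ω tan (ω (y - m))`, with `m` the midpoint, solves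
this Riccati equation with `q = ω²` on the whole interval as long as `ω (b - a) < π`.
-/

open scoped RealInnerProductSpace Interval Real

section InnerProductSpace

variable {E : Type*} [NormedAddCommGroup E] [InnerProductSpace ℝ E] {a b : ℝ}

lemma integral_inner_eq_neg_of_hasDerivAt {u u' v v' : ℝ → E}
    (hu : ∀ y ∈ [[a, b]], HasDerivAt u (u' y) y) (hv : ∀ y ∈ [[a, b]], HasDerivAt v (v' y) y)
    (hu' : ContinuousOn u' [[a, b]]) (hv' : ContinuousOn v' [[a, b]])
    (ha : u a = 0) (hb : u b = 0) :
    ∫ y in a..b, ⟪u y, v' y⟫ = -∫ y in a..b, ⟪u' y, v y⟫ := by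
  have int_right : IntervalIntegrable (fun y ↦ ⟪u y, v' y⟫) volume a b :=
    ((HasDerivAt.continuousOn hu).inner hv').intervalIntegrable
  have int_left : IntervalIntegrable (fun y ↦ ⟪u' y, v y⟫) volume a b :=
    (hu'.inner (HasDerivAt.continuousOn hv)).intervalIntegrable
  have boundary := intervalIntegral.integral_eq_sub_of_hasDerivAt
    (fun y hy ↦ (hu y hy).inner ℝ (hv y hy)) (int_right.add int_left)
  rw [intervalIntegral.integral_add int_right int_left, ha, hb, inner_zero_left, inner_zero_left,
    sub_zero] at boundary
  exact eq_neg_of_add_eq_zero_left boundary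

lemma two_mul_integral_inner_le {u v : ℝ → E} {c : ℝ} (hab : a ≤ b)
    (hu : ContinuousOn u [[a, b]]) (hv : ContinuousOn v [[a, b]]) (hc : 0 < c) :
    2 * ∫ y in a..b, ⟪u y, v y⟫ ≤
      c * (∫ y in a..b, ‖u y‖ ^ 2) + c⁻¹ * ∫ y in a..b, ‖v y‖ ^ 2 := by
  have young (y : ℝ) : 2 * ⟪u y, v y⟫ ≤ c * ‖u y‖ ^ 2 + c⁻¹ * ‖v y‖ ^ 2 :=
    calc 2 * ⟪u y, v y⟫
      _ ≤ 2 * ‖u y‖ * ‖v y‖ := by linarith [real_inner_le_norm (u y) (v y)]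
      _ ≤ c * ‖u y‖ ^ 2 + c⁻¹ * ‖v y‖ ^ 2 := two_mul_le_add_mul_sq hc
  have int_u : IntervalIntegrable (fun y ↦ c * ‖u y‖ ^ 2) volume a b :=
    (continuousOn_const.mul (hu.norm.pow 2)).intervalIntegrable
  have int_v : IntervalIntegrable (fun y ↦ c⁻¹ * ‖v y‖ ^ 2) volume a b :=
    (continuousOn_const.mul (hv.norm.pow 2)).intervalIntegrable
  have int_inner : IntervalIntegrable (fun y ↦ 2 * ⟪u y, v y⟫) volume a b :=
    (continuousOn_const.mul (hu.inner hv)).intervalIntegrable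
  simpa only [intervalIntegral.integral_add int_u int_v, intervalIntegral.integral_const_mul] using
    intervalIntegral.integral_mono hab int_inner (int_u.add int_v) young

lemma integral_mul_norm_sq_le_of_riccati {g g' : ℝ → E} {φ q : ℝ → ℝ} (hab : a ≤ b)
    (hg : ∀ y ∈ [[a, b]], HasDerivAt g (g' y) y) (hg' : ContinuousOn g' [[a, b]])
    (ha : g a = 0) (hb : g b = 0) (hq : ContinuousOn q [[a, b]])
    (hφ : ∀ y ∈ [[a, b]], HasDerivAt φ (q y + φ y ^ 2) y) :
    ∫ y in a..b, q y * ‖g y‖ ^ 2 ≤ ∫ y in a..b, ‖g' y‖ ^ 2 := by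
  let d : ℝ → ℝ := fun y ↦ (q y + φ y ^ 2) * ‖g y‖ ^ 2 + φ y * (2 * ⟪g y, g' y⟫)
  have cont_g : ContinuousOn g [[a, b]] := HasDerivAt.continuousOn hg
  have cont_φ : ContinuousOn φ [[a, b]] := HasDerivAt.continuousOn hφ
  have int_d : IntervalIntegrable d volume a b :=
    (((hq.add (cont_φ.pow 2)).mul (cont_g.norm.pow 2)).add
      (cont_φ.mul (continuousOn_const.mul (cont_g.inner hg')))).intervalIntegrable
  have int_g' : IntervalIntegrable (fun y ↦ ‖g' y‖ ^ 2) volume a b :=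
    (hg'.norm.pow 2).intervalIntegrable
  have integral_d : ∫ y in a..b, d y = 0 := by
    rw [intervalIntegral.integral_eq_sub_of_hasDerivAt
      (fun y hy ↦ (hφ y hy).mul (hg y hy).norm_sq) int_d]
    simp [ha, hb]
  have pointwise (y : ℝ) : q y * ‖g y‖ ^ 2 ≤ ‖g' y‖ ^ 2 + d y := by
    have square : ‖g' y + φ y • g y‖ ^ 2 =
        ‖g' y‖ ^ 2 + 2 * (φ y * ⟪g y, g' y⟫) + φ y ^ 2 * ‖g y‖ ^ 2 := by
      rw [norm_add_sq_real, real_inner_smul_right, real_inner_comm, norm_smul, mul_pow,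
        Real.norm_eq_abs, sq_abs]
    linarith [sq_nonneg ‖g' y + φ y • g y‖]
  calc ∫ y in a..b, q y * ‖g y‖ ^ 2
    _ ≤ ∫ y in a..b, (‖g' y‖ ^ 2 + d y) := intervalIntegral.integral_mono hab
        (hq.mul (cont_g.norm.pow 2)).intervalIntegrable (int_g'.add int_d) pointwise
    _ = ∫ y in a..b, ‖g' y‖ ^ 2 := by
        rw [intervalIntegral.integral_add int_g' int_d, integral_d, add_zero]

lemma hasDerivAt_mul_tan_mul_sub {ω m y : ℝ} (hcos : Real.cos (ω * (y - m)) ≠ 0) :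
    HasDerivAt (fun x ↦ ω * Real.tan (ω * (x - m)))
      (ω ^ 2 + (ω * Real.tan (ω * (y - m))) ^ 2) y := by
  have phase : HasDerivAt (fun x ↦ ω * (x - m)) (ω * 1) y :=
    ((hasDerivAt_id y).sub_const m).const_mul ω
  refine (((Real.hasDerivAt_tan hcos).comp y phase).const_mul ω).congr_deriv ?_
  rw [one_div, ← Real.inv_one_add_tan_sq hcos, inv_inv]
  ring

lemma cos_mul_sub_midpoint_pos {ω y : ℝ} (hω : 0 < ω) (hωπ : ω * (b - a) < π)
    (hy : y ∈ Set.Icc a b) : 0 < Real.cos (ω * (y - (a + b) / 2)) := by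
  refine Real.cos_pos_of_mem_Ioo ⟨?_, ?_⟩ <;> nlinarith [hy.1, hy.2]

lemma sq_mul_integral_norm_sq_le {g g' : ℝ → E} {ω : ℝ} (hab : a ≤ b)
    (hg : ∀ y ∈ [[a, b]], HasDerivAt g (g' y) y) (hg' : ContinuousOn g' [[a, b]])
    (ha : g a = 0) (hb : g b = 0) (hω : 0 < ω) (hωπ : ω * (b - a) < π) :
    ω ^ 2 * ∫ y in a..b, ‖g y‖ ^ 2 ≤ ∫ y in a..b, ‖g' y‖ ^ 2 := by
  rw [← intervalIntegral.integral_const_mul]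
  refine integral_mul_norm_sq_le_of_riccati hab hg hg' ha hb continuousOn_const fun y hy ↦
    hasDerivAt_mul_tan_mul_sub (m := (a + b) / 2) ?_
  exact (cos_mul_sub_midpoint_pos hω hωπ (Set.uIcc_of_le hab ▸ hy)).ne'

theorem integral_norm_sq_le_integral_norm_deriv_sq {g g' : ℝ → E} (hab : a < b)
    (hg : ∀ y ∈ [[a, b]], HasDerivAt g (g' y) y) (hg' : ContinuousOn g' [[a, b]])
    (ha : g a = 0) (hb : g b = 0) :
    ∫ y in a..b, ‖g y‖ ^ 2 ≤ ((b - a) / π) ^ 2 * ∫ y in a..b, ‖g' y‖ ^ 2 := by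
  have length_pos : 0 < b - a := sub_pos.2 hab
  suffices limit : (π / (b - a)) ^ 2 * ∫ y in a..b, ‖g y‖ ^ 2 ≤ ∫ y in a..b, ‖g' y‖ ^ 2 by
    rwa [← inv_div π, inv_pow, le_inv_mul_iff₀ (by positivity)]
  have tendsto : Filter.Tendsto (fun ω : ℝ ↦ ω ^ 2 * ∫ y in a..b, ‖g y‖ ^ 2)
      (nhdsWithin (π / (b - a)) (Set.Iio (π / (b - a))))
      (nhds ((π / (b - a)) ^ 2 * ∫ y in a..b, ‖g y‖ ^ 2)) :=
    (Continuous.tendsto (by fun_prop) _).mono_left nhdsWithin_le_nhds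
  refine le_of_tendsto tendsto ?_
  filter_upwards [Ioo_mem_nhdsLT (div_pos Real.pi_pos length_pos)] with ω hω
  exact sq_mul_integral_norm_sq_le hab.le hg hg' ha hb hω.1 ((lt_div_iff₀ length_pos).1 hω.2)

end InnerProductSpace

/-- `ψ` is a classical solution on `[a, b]` of the zero Fourier mode problem
`R⁻¹ψ'''' - Aψ'' = F'` with clamped boundary values `ψ = ψ' = 0` at `a` and `b`. The operator `A`
stands for multiplication by `iξ`; derivatives at the end points are two-sided. -/
structure IsZeroModeSolution {E : Type*} [NormedAddCommGroup E] [NormedSpace ℝ E]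
    (R : ℝ) (A : E →L[ℝ] E) (F ψ : ℝ → E) (a b : ℝ) : Prop where
  differentiableAt_source : ∀ y ∈ [[a, b]], DifferentiableAt ℝ F y
  differentiableAt_iteratedDeriv :
    ∀ k < 4, ∀ y ∈ [[a, b]], DifferentiableAt ℝ (iteratedDeriv k ψ) y
  left_eq_zero : ψ a = 0
  right_eq_zero : ψ b = 0
  deriv_left_eq_zero : deriv ψ a = 0
  deriv_right_eq_zero : deriv ψ b = 0
  equation : ∀ y ∈ [[a, b]], R⁻¹ • iteratedDeriv 4 ψ y - A (iteratedDeriv 2 ψ y) = deriv F y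

namespace IsZeroModeSolution

section NormedSpace

variable {E : Type*} [NormedAddCommGroup E] [NormedSpace ℝ E]
  {R : ℝ} {A : E →L[ℝ] E} {F ψ : ℝ → E} {a b : ℝ}

lemma continuousOn_source (h : IsZeroModeSolution R A F ψ a b) : ContinuousOn F [[a, b]] :=
  fun y hy ↦ (h.differentiableAt_source y hy).continuousAt.continuousWithinAt

lemma hasDerivAt_iteratedDeriv (h : IsZeroModeSolution R A F ψ a b) {k : ℕ} (hk : k < 4) :
    ∀ y ∈ [[a, b]], HasDerivAt (iteratedDeriv k ψ) (iteratedDeriv (k + 1) ψ y) y := fun y hy ↦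
  iteratedDeriv_succ (f := ψ) ▸ (h.differentiableAt_iteratedDeriv k hk y hy).hasDerivAt

lemma continuousOn_iteratedDeriv (h : IsZeroModeSolution R A F ψ a b) {k : ℕ} (hk : k < 4) :
    ContinuousOn (iteratedDeriv k ψ) [[a, b]] :=
  HasDerivAt.continuousOn (h.hasDerivAt_iteratedDeriv hk)

lemma hasDerivAt_flux (h : IsZeroModeSolution R A F ψ a b) :
    ∀ y ∈ [[a, b]],
      HasDerivAt (fun x ↦ R⁻¹ • iteratedDeriv 3 ψ x - A (iteratedDeriv 1 ψ x) - F x) 0 y := by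
  intro y hy
  refine ((((h.hasDerivAt_iteratedDeriv (by lia) y hy).const_smul R⁻¹).sub
    (A.hasFDerivAt.comp_hasDerivAt y (h.hasDerivAt_iteratedDeriv (by lia) y hy))).sub
    (h.differentiableAt_source y hy).hasDerivAt).congr_deriv ?_
  exact sub_eq_zero.2 (h.equation y hy)

end NormedSpace

variable {E : Type*} [NormedAddCommGroup E] [InnerProductSpace ℝ E]
  {R : ℝ} {A : E →L[ℝ] E} {F ψ : ℝ → E} {a b : ℝ}

lemma integral_inner_deriv_flux (h : IsZeroModeSolution R A F ψ a b) :
    ∫ y in a..b,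
      ⟪iteratedDeriv 1 ψ y, R⁻¹ • iteratedDeriv 3 ψ y - A (iteratedDeriv 1 ψ y) - F y⟫ = 0 := by
  have parts := integral_inner_eq_neg_of_hasDerivAt (h.hasDerivAt_iteratedDeriv (k := 0) (by lia))
    h.hasDerivAt_flux (h.continuousOn_iteratedDeriv (by lia)) continuousOn_const
    (by simpa using h.left_eq_zero) (by simpa using h.right_eq_zero)
  simpa using parts

lemma integral_norm_sq_iteratedDeriv_two_eq (h : IsZeroModeSolution R A F ψ a b) (hR : R ≠ 0)
    (hA : ∀ v, ⟪v, A v⟫ = 0) :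
    ∫ y in a..b, ‖iteratedDeriv 2 ψ y‖ ^ 2 = -R * ∫ y in a..b, ⟪iteratedDeriv 1 ψ y, F y⟫ := by
  have cont {k : ℕ} (hk : k < 4) := h.continuousOn_iteratedDeriv hk
  have diffusion : ∫ y in a..b, ⟪iteratedDeriv 1 ψ y, iteratedDeriv 3 ψ y⟫ =
      -∫ y in a..b, ‖iteratedDeriv 2 ψ y‖ ^ 2 := by
    simpa only [real_inner_self_eq_norm_sq] using integral_inner_eq_neg_of_hasDerivAt
      (h.hasDerivAt_iteratedDeriv (k := 1) (by lia)) (h.hasDerivAt_iteratedDeriv (k := 2) (by lia))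
      (cont (by lia)) (cont (by lia)) (by simpa using h.deriv_left_eq_zero)
      (by simpa using h.deriv_right_eq_zero)
  have balance : R⁻¹ * (-∫ y in a..b, ‖iteratedDeriv 2 ψ y‖ ^ 2) -
      ∫ y in a..b, ⟪iteratedDeriv 1 ψ y, F y⟫ = 0 := by
    rw [← diffusion, ← intervalIntegral.integral_const_mul, ← intervalIntegral.integral_sub
      (continuousOn_const.mul ((cont (by lia)).inner (cont (by lia)))).intervalIntegrable
      ((cont (by lia)).inner h.continuousOn_source).intervalIntegrable]
    simpa only [inner_sub_right, real_inner_smul_right, hA, sub_zero]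
      using h.integral_inner_deriv_flux
  field_simp at balance
  linarith

lemma integral_norm_sq_iteratedDeriv_one_le (h : IsZeroModeSolution R A F ψ a b) (hab : a < b) :
    ∫ y in a..b, ‖iteratedDeriv 1 ψ y‖ ^ 2 ≤
      ((b - a) / π) ^ 2 * ∫ y in a..b, ‖iteratedDeriv 2 ψ y‖ ^ 2 :=
  integral_norm_sq_le_integral_norm_deriv_sq hab (h.hasDerivAt_iteratedDeriv (by lia))
    (h.continuousOn_iteratedDeriv (by lia)) (by simpa using h.deriv_left_eq_zero)
    (by simpa using h.deriv_right_eq_zero)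

lemma integral_norm_sq_iteratedDeriv_two_le (h : IsZeroModeSolution R A F ψ a b) (hR : R ≠ 0)
    (hA : ∀ v, ⟪v, A v⟫ = 0) (hab : a < b) :
    ∫ y in a..b, ‖iteratedDeriv 2 ψ y‖ ^ 2 ≤
      R ^ 2 * ((b - a) / π) ^ 2 * ∫ y in a..b, ‖F y‖ ^ 2 := by
  have c_pos : 0 < ((b - a) / π) ^ 2 := pow_pos (div_pos (sub_pos.2 hab) Real.pi_pos) 2
  have young : 2 * ∫ y in a..b, ‖iteratedDeriv 2 ψ y‖ ^ 2 ≤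
      (((b - a) / π) ^ 2)⁻¹ * (∫ y in a..b, ‖iteratedDeriv 1 ψ y‖ ^ 2) +
        ((b - a) / π) ^ 2 * (R ^ 2 * ∫ y in a..b, ‖F y‖ ^ 2) := by
    rw [h.integral_norm_sq_iteratedDeriv_two_eq hR hA]
    simpa [real_inner_smul_right, norm_smul, mul_pow] using
      two_mul_integral_inner_le hab.le (h.continuousOn_iteratedDeriv (k := 1) (by lia))
        (h.continuousOn_source.const_smul (-R)) (inv_pos.2 c_pos)
  have absorb := (inv_mul_le_iff₀ c_pos).2 (h.integral_norm_sq_iteratedDeriv_one_le hab)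
  linarith

end IsZeroModeSolution

theorem zero_mode_estimate_general {E : Type*} [NormedAddCommGroup E] [InnerProductSpace ℝ E]
    {R : ℝ} {A : E →L[ℝ] E} {F ψ : ℝ → E} {a b : ℝ} (h : IsZeroModeSolution R A F ψ a b)
    (hR : R ≠ 0) (hA : ∀ v, ⟪v, A v⟫ = 0) (hab : a < b) :
    ∫ y in a..b, ‖deriv ψ y‖ ^ 2 ≤ R ^ 2 * ((b - a) / π) ^ 4 * ∫ y in a..b, ‖F y‖ ^ 2 ∧
      ∫ y in a..b, ‖ψ y‖ ^ 2 ≤ R ^ 2 * ((b - a) / π) ^ 6 * ∫ y in a..b, ‖F y‖ ^ 2 := by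
  have second := h.integral_norm_sq_iteratedDeriv_two_le hR hA hab
  have first : ∫ y in a..b, ‖deriv ψ y‖ ^ 2 ≤
      R ^ 2 * ((b - a) / π) ^ 4 * ∫ y in a..b, ‖F y‖ ^ 2 := by
    rw [← iteratedDeriv_one]
    calc _ ≤ ((b - a) / π) ^ 2 * ∫ y in a..b, ‖iteratedDeriv 2 ψ y‖ ^ 2 :=
          h.integral_norm_sq_iteratedDeriv_one_le hab
      _ ≤ ((b - a) / π) ^ 2 * (R ^ 2 * ((b - a) / π) ^ 2 * ∫ y in a..b, ‖F y‖ ^ 2) := by gcongr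
      _ = _ := by ring
  refine ⟨first, ?_⟩
  calc _ ≤ ((b - a) / π) ^ 2 * ∫ y in a..b, ‖deriv ψ y‖ ^ 2 := by
        simpa using integral_norm_sq_le_integral_norm_deriv_sq hab
          (h.hasDerivAt_iteratedDeriv (k := 0) (by lia)) (h.continuousOn_iteratedDeriv (by lia))
          (by simpa using h.left_eq_zero) (by simpa using h.right_eq_zero)
    _ ≤ ((b - a) / π) ^ 2 * (R ^ 2 * ((b - a) / π) ^ 4 * ∫ y in a..b, ‖F y‖ ^ 2) := by gcongr
    _ = _ := by ring

lemma real_inner_I_mul_ofReal_mul_self (ξ : ℝ) (z : ℂ) : ⟪z, I * ξ * z⟫ = 0 := by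
  rw [Complex.inner, mul_assoc I, mul_assoc I, mul_assoc, mul_conj]
  simp

/-- estimates for the zero Fourier mode. -/
theorem zero_mode_estimate
    (R : ℝ) (hR : 0 < R) (ξ : ℝ)
    (F : ℝ → ℂ) (hF : ContDiff ℝ 1 F)
    (ψ : ℝ → ℂ) (hψ : ContDiff ℝ 4 ψ)
    (hb0 : ψ 0 = 0) (hb1 : ψ 1 = 0) (hb0' : deriv ψ 0 = 0) (hb1' : deriv ψ 1 = 0)
    (heq : ∀ y ∈ Set.Icc (0:ℝ) 1,
      (1/(R:ℂ)) * iteratedDeriv 4 ψ y - Complex.I * (ξ:ℂ) * iteratedDeriv 2 ψ y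
        = deriv F y)
 :
    l2sq (deriv ψ) ≤ (R^2 / Real.pi^4) * l2sq F
      ∧ l2sq ψ ≤ (R^2 / Real.pi^6) * l2sq F := by
  have solution : IsZeroModeSolution R (ContinuousLinearMap.mul ℝ ℂ (I * ξ)) F ψ 0 1 :=
    { differentiableAt_source := fun y _ ↦ hF.differentiable one_ne_zero y
      differentiableAt_iteratedDeriv := fun k hk y _ ↦
        hψ.differentiable_iteratedDeriv k (mod_cast hk) y
      left_eq_zero := hb0
      right_eq_zero := hb1
      deriv_left_eq_zero := hb0'
      deriv_right_eq_zero := hb1'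
      equation := by simpa [Set.uIcc_of_le] using heq }
  simpa [l2sq, div_eq_mul_inv] using zero_mode_estimate_general solution hR.ne'
    (real_inner_I_mul_ofReal_mul_self ξ) zero_lt_one

end
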